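/- For ε > 0 and k > 0, if for every positive integer n it holds that ε(nπ)⁴ + c(nπ)² + k > 0, then the quadratic form Q(η) = ∫₀¹ [ε(η'')² + c(η')² + k η²] ds is positive for every nonzero smooth η with η(0) = η(1) = 0, even when c < 0. -/

import Mathlib

/-!
The sine functions `sin (nπs)` diagonalise `Q` on smooth functions vanishing at the endpoints.
Parseval's identity for the sine system on `[0, 1]` (`hasSum_sineCoeff_sq`) follows from Parseval's
identity for Fourier series on `[-1, 1]` applied to the odd extension of a function. Writing `bₙ`
for the sine coefficients of `η`, two integrations by parts show that those of `η''` are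
`-(nπ)² bₙ` (`sineCoeff_deriv_deriv`); only `η 0 = η 1 = 0` is needed, since the other boundary
terms carry a factor `sin (nπs)`, which vanishes at both endpoints. One more integration by parts
gives `∫ η'² = -∫ η η''`, and polarising Parseval's identity turns `Q η` into
`∑ (ε (nπ)⁴ + c (nπ)² + k) bₙ²`, summed over all integers. All terms are nonnegative, and one of
them is positive because `∑ bₙ² = ∫ η² > 0`.
-/

open Real

/-- The `n`-th sine coefficient `∫₀¹ u(x) sin(nπx) dx`, without normalising factor and for every
integer `n`. -/
noncomputable def sineCoeff (u : ℝ → ℝ) (n : ℤ) : ℝ :=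
  ∫ x in (0:ℝ)..1, u x * sin (n * π * x)

/-- The odd extension of `u` from `(0, ∞)` to `ℝ`, with complex values. -/
noncomputable def oddExt (u : ℝ → ℝ) (x : ℝ) : ℂ :=
  ((SignType.sign x : ℝ) * u |x| : ℝ)

lemma integral_symm_eq {E : Type*} [NormedAddCommGroup E] [NormedSpace ℝ E] (g : ℝ → E)
    (hg : IntervalIntegrable g MeasureTheory.volume (-1) 1) :
    ∫ x in (-1:ℝ)..1, g x = ∫ x in (0:ℝ)..1, (g x + g (-x)) := by
  have h1 : IntervalIntegrable g MeasureTheory.volume (-1) 0 :=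
    hg.mono_set (by
      rw [Set.uIcc_of_le (by norm_num), Set.uIcc_of_le (by norm_num)]
      exact Set.Icc_subset_Icc le_rfl (by norm_num))
  have h2 : IntervalIntegrable g MeasureTheory.volume 0 1 :=
    hg.mono_set (by
      rw [Set.uIcc_of_le (by norm_num), Set.uIcc_of_le (by norm_num)]
      exact Set.Icc_subset_Icc (by norm_num) le_rfl)
  have h3 : IntervalIntegrable (fun x => g (-x)) MeasureTheory.volume 0 1 := by
    simpa using (IntervalIntegrable.iff_comp_neg (f := g)).1 h1.symm
  rw [intervalIntegral.integral_add h2 h3, intervalIntegral.integral_comp_neg,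
    ← intervalIntegral.integral_add_adjacent_intervals h1 h2, neg_zero, add_comm]

lemma oddExt_memLp {u : ℝ → ℝ} (hu : Continuous u) :
    MeasureTheory.MemLp (oddExt u) 2
      (MeasureTheory.volume.restrict (Set.Ioc (-1:ℝ) 1)) := by
  obtain ⟨C, hC⟩ := (isCompact_Icc (a := (0:ℝ)) (b := 1)).exists_bound_of_continuousOn
    hu.continuousOn
  have hsign : Measurable fun x : ℝ => ((SignType.sign x : SignType) : ℝ) := by
    have : (fun x : ℝ => ((SignType.sign x : SignType) : ℝ))
        = fun x => if 0 < x then 1 else if x < 0 then -1 else 0 := by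
      ext x
      rw [sign_apply]
      split_ifs <;> simp
    rw [this]
    exact Measurable.ite measurableSet_Ioi measurable_const
      (Measurable.ite measurableSet_Iio measurable_const measurable_const)
  refine MeasureTheory.MemLp.of_bound (C := C) ?_ ?_
  · refine Measurable.aestronglyMeasurable ?_
    exact Complex.measurable_ofReal.comp
      (hsign.mul (hu.measurable.comp measurable_norm))
  · refine (MeasureTheory.ae_restrict_iff' measurableSet_Ioc).2 (Filter.Eventually.of_forall ?_)
    intro x hx
    have hb := hC |x| ⟨abs_nonneg x, abs_le.2 ⟨hx.1.le, hx.2⟩⟩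
    have hs : |((SignType.sign x : SignType) : ℝ)| ≤ 1 := by
      rcases lt_trichotomy x 0 with h | h | h <;> simp [h]
    rw [oddExt, Complex.norm_real, norm_mul]
    calc _ ≤ 1 * ‖u |x|‖ := by gcongr; exact hs
      _ ≤ C := by rw [one_mul]; exact hb

lemma oddExt_fourierCoeffOn {u : ℝ → ℝ} (hu : Continuous u) (n : ℤ) :
    fourierCoeffOn (by norm_num : (-1:ℝ) < 1) (oddExt u) n
      = -Complex.I * (sineCoeff u n : ℂ) := by
  have hint : IntervalIntegrable (oddExt u) MeasureTheory.volume (-1) 1 := by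
    rw [intervalIntegrable_iff_integrableOn_Ioc_of_le (by norm_num)]
    exact (oddExt_memLp hu).integrable (by norm_num)
  have hint' : IntervalIntegrable
      (fun x : ℝ => fourier (-n) (x : AddCircle ((1:ℝ) - -1)) • oddExt u x)
      MeasureTheory.volume (-1) 1 := by
    refine hint.continuousOn_mul (Continuous.continuousOn ?_)
    exact (map_continuous (fourier (-n))).comp (AddCircle.continuous_mk' _)
  rw [fourierCoeffOn_eq_integral, integral_symm_eq _ hint']
  have hpt : ∀ x ∈ Set.Ioo (0:ℝ) 1,
      fourier (-n) (x : AddCircle ((1:ℝ) - -1)) • oddExt u x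
        + fourier (-n) ((-x : ℝ) : AddCircle ((1:ℝ) - -1)) • oddExt u (-x)
      = (-2 * Complex.I) * ((u x * sin (n * π * x) : ℝ) : ℂ) := by
    intro x hx
    have e1 : (2 * (π:ℂ) * Complex.I * ((-n : ℤ) : ℂ) * (x:ℂ) / (((1:ℝ) - -1 : ℝ) : ℂ))
        = ((-(n * π * x) : ℝ) : ℂ) * Complex.I := by
      push_cast; ring
    have e2 : (2 * (π:ℂ) * Complex.I * ((-n : ℤ) : ℂ) * ((-x : ℝ):ℂ) / (((1:ℝ) - -1 : ℝ) : ℂ))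
        = (((n * π * x) : ℝ) : ℂ) * Complex.I := by
      push_cast; ring
    have o1 : oddExt u x = u x := by simp [oddExt, abs_of_pos hx.1, sign_pos hx.1]
    have o2 : oddExt u (-x) = -u x := by
      simp [oddExt, abs_of_pos hx.1, sign_neg (neg_lt_zero.2 hx.1)]
    rw [fourier_coe_apply, fourier_coe_apply, e1, e2, o1, o2, Complex.exp_mul_I, Complex.exp_mul_I,
      ← Complex.ofReal_cos, ← Complex.ofReal_sin, ← Complex.ofReal_cos, ← Complex.ofReal_sin,
      Real.cos_neg, Real.sin_neg, smul_eq_mul, smul_eq_mul]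
    push_cast
    ring
  rw [intervalIntegral.integral_congr_Ioo_of_le (by norm_num) hpt,
    intervalIntegral.integral_const_mul, intervalIntegral.integral_ofReal, sineCoeff,
    Complex.real_smul]
  push_cast
  ring

/-- Parseval's identity for the sine system on `[0, 1]`. The sum runs over all integers, so each
positive `n` is counted twice, which accounts for the factor `2` of the usual form. -/
lemma hasSum_sineCoeff_sq {u : ℝ → ℝ} (hu : Continuous u) :
    HasSum (fun n : ℤ => sineCoeff u n ^ 2) (∫ x in (0:ℝ)..1, u x ^ 2) := by
  have h := hasSum_sq_fourierCoeffOn (by norm_num : (-1:ℝ) < 1) (oddExt_memLp hu)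
  have hint : IntervalIntegrable (fun x => ‖oddExt u x‖ ^ 2) MeasureTheory.volume (-1) 1 := by
    rw [intervalIntegrable_iff_integrableOn_Ioc_of_le (by norm_num)]
    exact (oddExt_memLp hu).integrable_norm_pow (by norm_num)
  rw [integral_symm_eq _ hint] at h
  have hpt : ∀ x ∈ Set.Ioo (0:ℝ) 1,
      ‖oddExt u x‖ ^ 2 + ‖oddExt u (-x)‖ ^ 2 = 2 * u x ^ 2 := by
    intro x hx
    have o1 : oddExt u x = u x := by simp [oddExt, abs_of_pos hx.1, sign_pos hx.1]
    have o2 : oddExt u (-x) = -u x := by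
      simp [oddExt, abs_of_pos hx.1, sign_neg (neg_lt_zero.2 hx.1)]
    rw [o1, o2, norm_neg, Complex.norm_real, Real.norm_eq_abs, sq_abs]
    ring
  rw [intervalIntegral.integral_congr_Ioo_of_le (by norm_num) hpt,
    intervalIntegral.integral_const_mul] at h
  convert h using 1
  · ext n
    rw [oddExt_fourierCoeffOn hu, norm_mul, norm_neg, Complex.norm_I, one_mul, Complex.norm_real,
      Real.norm_eq_abs, sq_abs]
  · rw [smul_eq_mul]; ring

/-- Two integrations by parts: on the sine coefficients of functions vanishing at `0` and `1`, the
second derivative acts as multiplication by `-(nπ)²`. -/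
lemma sineCoeff_deriv_deriv {u u' u'' : ℝ → ℝ} (h1 : ∀ x, HasDerivAt u (u' x) x)
    (h2 : ∀ x, HasDerivAt u' (u'' x) x) (hc : Continuous u'') (hu0 : u 0 = 0) (hu1 : u 1 = 0)
    (n : ℤ) : sineCoeff u'' n = -(n * π) ^ 2 * sineCoeff u n := by
  have hcu : Continuous u := continuous_iff_continuousAt.2 fun x => (h1 x).continuousAt
  have hcu' : Continuous u' := continuous_iff_continuousAt.2 fun x => (h2 x).continuousAt
  have hlin : ∀ x : ℝ, HasDerivAt (fun x : ℝ => n * π * x) (n * π) x := fun x => by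
    simpa using (hasDerivAt_id x).const_mul (n * π)
  have hs : ∀ x : ℝ, HasDerivAt (fun x : ℝ => sin (n * π * x)) (cos (n * π * x) * (n * π)) x :=
    fun x => (hlin x).sin
  have hcs : ∀ x : ℝ, HasDerivAt (fun x : ℝ => cos (n * π * x)) (-sin (n * π * x) * (n * π)) x :=
    fun x => (hlin x).cos
  have p1 := intervalIntegral.integral_mul_deriv_eq_deriv_mul (a := 0) (b := 1)
    (fun x _ => hs x) (fun x _ => h2 x)
    (Continuous.intervalIntegrable (by fun_prop) _ _) (hc.intervalIntegrable _ _)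
  have p2 := intervalIntegral.integral_mul_deriv_eq_deriv_mul (a := 0) (b := 1)
    (fun x _ => hcs x) (fun x _ => h1 x)
    (Continuous.intervalIntegrable (by fun_prop) _ _) (hcu'.intervalIntegrable _ _)
  simp only [hu0, hu1, mul_zero, mul_one, sin_zero, Real.sin_int_mul_pi, zero_mul, sub_zero,
    zero_sub] at p1 p2
  have q1 : ∫ x in (0:ℝ)..1, cos (n * π * x) * (n * π) * u' x
      = (n * π) * ∫ x in (0:ℝ)..1, cos (n * π * x) * u' x := by
    rw [← intervalIntegral.integral_const_mul]
    congr 1; ext x; ring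
  have q2 : ∫ x in (0:ℝ)..1, -sin (n * π * x) * (n * π) * u x
      = -(n * π) * ∫ x in (0:ℝ)..1, u x * sin (n * π * x) := by
    rw [← intervalIntegral.integral_const_mul]
    congr 1; ext x; ring
  have q3 : sineCoeff u'' n = ∫ x in (0:ℝ)..1, sin (n * π * x) * u'' x := by
    rw [sineCoeff]; congr 1; ext x; ring
  rw [q3, p1, q1, p2, q2, sineCoeff]
  ring

lemma sineCoeff_add {u v : ℝ → ℝ} (hu : Continuous u) (hv : Continuous v) (n : ℤ) :
    sineCoeff (fun x => u x + v x) n = sineCoeff u n + sineCoeff v n := by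
  simp only [sineCoeff, add_mul]
  exact intervalIntegral.integral_add (Continuous.intervalIntegrable (by fun_prop) _ _)
    (Continuous.intervalIntegrable (by fun_prop) _ _)

theorem stmt_8 (ε c k : ℝ) (hε : 0 < ε) (hk : 0 < k)
    (hchar : ∀ n : ℕ, 1 ≤ n → 0 < ε * (n * π) ^ 4 + c * (n * π) ^ 2 + k)
    (η : ℝ → ℝ) (hη : ContDiff ℝ (⊤ : ℕ∞) η) (h0 : η 0 = 0) (h1 : η 1 = 0)
    (hne : ∃ s ∈ Set.Icc (0:ℝ) 1, η s ≠ 0) :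
    0 < ∫ s in (0:ℝ)..1,
        (ε * (iteratedDeriv 2 η s) ^ 2 + c * (deriv η s) ^ 2 + k * (η s) ^ 2) := by
  have e2 : iteratedDeriv 2 η = deriv (deriv η) := by
    rw [iteratedDeriv_succ, iteratedDeriv_one]
  have hη' : ContDiff ℝ (⊤ : ℕ∞) (deriv η) := (contDiff_infty_iff_deriv.1 hη).2
  have hη'' : ContDiff ℝ (⊤ : ℕ∞) (deriv (deriv η)) := (contDiff_infty_iff_deriv.1 hη').2
  have d1 : ∀ x, HasDerivAt η (deriv η x) x :=
    fun x => ((contDiff_infty_iff_deriv.1 hη).1 x).hasDerivAt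
  have d2 : ∀ x, HasDerivAt (deriv η) (deriv (deriv η) x) x :=
    fun x => ((contDiff_infty_iff_deriv.1 hη').1 x).hasDerivAt
  rw [e2]
  set v := deriv η with hv
  set w := deriv v with hw
  have cη := hη.continuous
  have cv := hη'.continuous
  have cw := hη''.continuous
  have hcoef := sineCoeff_deriv_deriv d1 d2 cw h0 h1
  have S0 := hasSum_sineCoeff_sq cη
  have S2 := hasSum_sineCoeff_sq cw
  have S1 : HasSum (fun n : ℤ => sineCoeff (fun x => η x + w x) n ^ 2)
      (∫ x in (0:ℝ)..1, (η x + w x) ^ 2) := hasSum_sineCoeff_sq (cη.add cw)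
  have ii : ∀ {f : ℝ → ℝ}, Continuous f → IntervalIntegrable f MeasureTheory.volume 0 1 :=
    fun hf => hf.intervalIntegrable _ _
  have parts : ∫ x in (0:ℝ)..1, η x * w x = -∫ x in (0:ℝ)..1, v x ^ 2 := by
    rw [intervalIntegral.integral_mul_deriv_eq_deriv_mul (fun x _ => d1 x) (fun x _ => d2 x)
      (ii cv) (ii cw), h0, h1]
    simp [pow_two]
  have expand : ∫ x in (0:ℝ)..1, (η x + w x) ^ 2
      = (∫ x in (0:ℝ)..1, η x ^ 2) - 2 * (∫ x in (0:ℝ)..1, v x ^ 2)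
        + ∫ x in (0:ℝ)..1, w x ^ 2 := by
    have : ∀ x, (η x + w x) ^ 2 = η x ^ 2 + 2 * (η x * w x) + w x ^ 2 := fun x => by ring
    simp only [this]
    rw [intervalIntegral.integral_add (ii (by fun_prop)) (ii (by fun_prop)),
      intervalIntegral.integral_add (ii (by fun_prop)) (ii (by fun_prop)),
      intervalIntegral.integral_const_mul, parts]
    ring
  have hQ : ∫ s in (0:ℝ)..1, (ε * w s ^ 2 + c * v s ^ 2 + k * η s ^ 2)
      = ε * (∫ x in (0:ℝ)..1, w x ^ 2) + c * (∫ x in (0:ℝ)..1, v x ^ 2)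
        + k * ∫ x in (0:ℝ)..1, η x ^ 2 := by
    rw [intervalIntegral.integral_add (ii (by fun_prop)) (ii (by fun_prop)),
      intervalIntegral.integral_add (ii (by fun_prop)) (ii (by fun_prop)),
      intervalIntegral.integral_const_mul, intervalIntegral.integral_const_mul,
      intervalIntegral.integral_const_mul]
  have hS : HasSum (fun n : ℤ => (ε * (n * π) ^ 4 + c * (n * π) ^ 2 + k) * sineCoeff η n ^ 2)
      (∫ s in (0:ℝ)..1, (ε * w s ^ 2 + c * v s ^ 2 + k * η s ^ 2)) := by
    -- Polarisation: `∫ v² = (∫ η² + ∫ w² - ∫ (η + w)²) / 2`.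
    convert ((S2.mul_left ε).add (((S0.add S2).sub S1).mul_left (c / 2))).add (S0.mul_left k)
      using 1
    -- The two sides reach the addition of `ℝ` through different instances.
    · rfl
    · ext n
      rw [sineCoeff_add cη cw, hcoef]
      ring
    · rw [hQ, expand]
      ring
  have hpos : ∀ n : ℤ, 0 < ε * (n * π) ^ 4 + c * (n * π) ^ 2 + k := by
    intro n
    rcases eq_or_ne n 0 with rfl | hn
    · simpa using hk
    · have h := hchar n.natAbs (Int.natAbs_pos.2 hn)
      have hsq : ((n.natAbs : ℝ) * π) ^ 2 = (n * π) ^ 2 := by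
        rw [Nat.cast_natAbs, Int.cast_abs, mul_pow, sq_abs, mul_pow]
      have h4 : ((n.natAbs : ℝ) * π) ^ 4 = (n * π) ^ 4 := by
        linear_combination (((n.natAbs : ℝ) * π) ^ 2 + (n * π) ^ 2) * hsq
      rwa [hsq, h4] at h
  have hnorm : 0 < ∫ x in (0:ℝ)..1, η x ^ 2 := by
    obtain ⟨s, hs, hs'⟩ := hne
    exact intervalIntegral.integral_pos (by norm_num) (by fun_prop)
      (fun x _ => sq_nonneg _) ⟨s, hs, by positivity⟩
  obtain ⟨m, hm⟩ : ∃ m, sineCoeff η m ≠ 0 := by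
    by_contra! hall
    simp only [hall, ne_eq, OfNat.ofNat_ne_zero, not_false_eq_true, zero_pow] at S0
    exact hnorm.ne' (S0.unique hasSum_zero)
  have hmpos : 0 < (ε * (m * π) ^ 4 + c * (m * π) ^ 2 + k) * sineCoeff η m ^ 2 :=
    mul_pos (hpos m) (by positivity)
  exact hmpos.trans_le
    (le_hasSum hS m fun n _ => mul_nonneg (hpos n).le (sq_nonneg _))
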